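/- Let G~ be a mixed graph with connected components G~₁, …, G~_t. Then r(G~) = 2m(G) − 2κ(G) + 1 if and only if exactly one connected component G~₀ (with underlying graph G₀) satisfies r(G~₀) = 2m(G₀) − 2κ(G₀) + 1 while every other connected component G~_i satisfies r(G~_i) = 2m(G_i) − 2κ(G_i). -/

import Mathlib

open scoped Classical

namespace MixedPaper

universe u

/-- A mixed graph: a finite simple graph together with an orientation of a subset
of its edges.  `arc u v = true` means there is an arc from `u` to `v`. -/
structure MixedGraph (V : Type u) where
  graph : SimpleGraph V
  arc : V → V → Bool
  arc_adj : ∀ u v, arc u v → graph.Adj u v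
  arc_antisymm : ∀ u v, arc u v → ¬ arc v u

variable {V : Type u}

/-- The Hermitian adjacency matrix of a mixed graph. -/
noncomputable def MixedGraph.hMatrix [Fintype V] [DecidableEq V] (M : MixedGraph V) :
    Matrix V V ℂ := fun u v =>
  if M.arc u v then Complex.I
  else if M.arc v u then -Complex.I
  else if M.graph.Adj u v then 1 else 0

/-- The H-rank of a mixed graph: the rank of its Hermitian adjacency matrix. -/
noncomputable def MixedGraph.hRank [Fintype V] [DecidableEq V] (M : MixedGraph V) : ℕ :=
  M.hMatrix.rank

/-- The matching number of a simple graph. -/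
noncomputable def matchingNumber (G : SimpleGraph V) : ℕ :=
  sSup {k | ∃ N : G.Subgraph, N.IsMatching ∧ N.edgeSet.ncard = k}

/-- A subgraph is a cycle subgraph if it is connected and every one of its vertices
has exactly two neighbours in it. -/
def IsCycleSubgraph {G : SimpleGraph V} (C : G.Subgraph) : Prop :=
  C.Connected ∧ ∀ v ∈ C.verts, {w | C.Adj v w}.ncard = 2

/-- κ(G) : the number of even cycles of G. -/
noncomputable def evenCycleCount (G : SimpleGraph V) : ℕ :=
  {C : G.Subgraph | IsCycleSubgraph C ∧ Even C.verts.ncard}.ncard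

/-- c(G) = |E(G)| - |V(G)| + ω(G), the cyclomatic number. -/
noncomputable def cyclomatic [Fintype V] (G : SimpleGraph V) : ℤ :=
  (G.edgeSet.ncard : ℤ) - (Fintype.card V : ℤ) + (Nat.card G.ConnectedComponent : ℤ)

/-- The induced mixed subgraph on a set of vertices. -/
def MixedGraph.induce (M : MixedGraph V) (S : Set V) : MixedGraph S where
  graph := M.graph.induce S
  arc := fun a b => M.arc a.1 b.1
  arc_adj := fun a b h => M.arc_adj a.1 b.1 h
  arc_antisymm := fun a b h => M.arc_antisymm a.1 b.1 h

/-- The mixed subgraph induced by a connected component of the underlying graph. -/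
def MixedGraph.comp (M : MixedGraph V) (c : M.graph.ConnectedComponent) :
    MixedGraph c.supp := M.induce c.supp

/-- The signature |f - b| of a closed walk in a mixed graph: the absolute difference
between the numbers of forward and backward arcs along the walk. -/
def walkSignature (M : MixedGraph V) {u : V} (w : M.graph.Walk u u) : ℕ :=
  ((w.darts.countP fun d => M.arc d.toProd.1 d.toProd.2 : ℤ) -
    (w.darts.countP fun d => M.arc d.toProd.2 d.toProd.1 : ℤ)).natAbs

/-- The signature of the cycle subgraph `C` of the mixed graph `M` satisfies the
predicate `P` (expressed via a closed walk traversing `C`; the signature does not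
depend on the choice of traversal). -/
def CycleSig (M : MixedGraph V) (C : M.graph.Subgraph) (P : ℕ → Prop) : Prop :=
  ∃ (u : V) (w : M.graph.Walk u u), w.IsCycle ∧
    {v | v ∈ w.support} = C.verts ∧ {e | e ∈ w.edges} = C.edgeSet ∧
    P (walkSignature M w)

/-- `C` is a pendant cycle with unique vertex `x` of degree 3. -/
def IsPendantCycle (G : SimpleGraph V) (C : G.Subgraph) (x : V) : Prop :=
  IsCycleSubgraph C ∧ x ∈ C.verts ∧ {w | G.Adj x w}.ncard = 3 ∧
    ∀ v ∈ C.verts, v ≠ x → {w | G.Adj v w}.ncard = 2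

/-- G has no pendant vertices (vertices of degree 1). -/
def NoPendantVerts (G : SimpleGraph V) : Prop := ∀ u : V, {w | G.Adj u w}.ncard ≠ 1

/-- The (distinct) cycles of G are pairwise vertex-disjoint. -/
def CyclesVertexDisjoint (G : SimpleGraph V) : Prop :=
  ∀ C₁ C₂ : G.Subgraph, IsCycleSubgraph C₁ → IsCycleSubgraph C₂ → C₁ ≠ C₂ →
    Disjoint C₁.verts C₂.verts

/-- The (distinct) even cycles of G are pairwise vertex-disjoint. -/
def EvenCyclesVertexDisjoint (G : SimpleGraph V) : Prop :=
  ∀ C₁ C₂ : G.Subgraph, IsCycleSubgraph C₁ → IsCycleSubgraph C₂ →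
    Even C₁.verts.ncard → Even C₂.verts.ncard → C₁ ≠ C₂ →
    Disjoint C₁.verts C₂.verts

/-- One pendant `K₂` deletion step, recorded on the surviving vertex sets:
`u` is pendant in the graph induced on `S` with unique neighbour `v` there,
and both are deleted. -/
def PendantStep (G : SimpleGraph V) (S T : Set V) : Prop :=
  ∃ u v, u ∈ S ∧ v ∈ S ∧ {w | w ∈ S ∧ G.Adj u w} = {v} ∧ T = S \ {u, v}

/-- `S` is reachable from the full vertex set by a sequence of pendant K₂ deletions. -/
def PendantReaches (G : SimpleGraph V) (S : Set V) : Prop :=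
  Relation.ReflTransGen (PendantStep G) Set.univ S

/-- The graph induced on `S` has no pendant vertices. -/
def NoPendantIn (G : SimpleGraph V) (S : Set V) : Prop :=
  ∀ u ∈ S, {w | w ∈ S ∧ G.Adj u w}.ncard ≠ 1

/-- `u` lies on some even cycle of `G`. -/
def OnEvenCycle (G : SimpleGraph V) (u : V) : Prop :=
  ∃ C : G.Subgraph, IsCycleSubgraph C ∧ Even C.verts.ncard ∧ u ∈ C.verts

/-- G is the graph ∞(p,1,q): two cycles of lengths p and q sharing exactly one vertex. -/
def IsInfinityGraph (G : SimpleGraph V) (p q : ℕ) : Prop :=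
  ∃ C₁ C₂ : G.Subgraph, IsCycleSubgraph C₁ ∧ IsCycleSubgraph C₂ ∧
    C₁.verts.ncard = p ∧ C₂.verts.ncard = q ∧
    (C₁.verts ∩ C₂.verts).ncard = 1 ∧ C₁ ⊔ C₂ = ⊤

/-- G is the theta graph θ(p,l,q): three internally disjoint paths with p, l, q
vertices respectively, joining two common endvertices. -/
def IsThetaGraph (G : SimpleGraph V) (p l q : ℕ) : Prop :=
  2 ≤ p ∧ 2 ≤ l ∧ 2 ≤ q ∧ ¬(p = 2 ∧ l = 2) ∧ ¬(p = 2 ∧ q = 2) ∧ ¬(l = 2 ∧ q = 2) ∧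
  ∃ (a b : V) (W₁ W₂ W₃ : G.Walk a b), W₁.IsPath ∧ W₂.IsPath ∧ W₃.IsPath ∧
    W₁.length = p - 1 ∧ W₂.length = l - 1 ∧ W₃.length = q - 1 ∧
    (∀ v : V, v ∈ W₁.support ∨ v ∈ W₂.support ∨ v ∈ W₃.support) ∧
    (∀ e ∈ G.edgeSet, e ∈ W₁.edges ∨ e ∈ W₂.edges ∨ e ∈ W₃.edges) ∧
    {v | v ∈ W₁.support ∧ v ∈ W₂.support} = {a, b} ∧
    {v | v ∈ W₁.support ∧ v ∈ W₃.support} = {a, b} ∧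
    {v | v ∈ W₂.support ∧ v ∈ W₃.support} = {a, b}

/-- Every odd cycle of `M` has signature satisfying `P`. -/
def OddCyclesSig (M : MixedGraph V) (P : ℕ → Prop) : Prop :=
  ∀ C : M.graph.Subgraph, IsCycleSubgraph C → Odd C.verts.ncard → CycleSig M C P

/-- Every even cycle of `M`, of length `n`, has signature `s` satisfying `P n s`. -/
def EvenCyclesSig (M : MixedGraph V) (P : ℕ → ℕ → Prop) : Prop :=
  ∀ C : M.graph.Subgraph, IsCycleSubgraph C → Even C.verts.ncard →
    CycleSig M C (P C.verts.ncard)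

/-- The whole mixed graph is a single cycle. -/
def IsCycleMG (M : MixedGraph V) : Prop := IsCycleSubgraph (⊤ : M.graph.Subgraph)

/-- The family 𝔊₀. -/
def MemG0 [Fintype V] [DecidableEq V] (M : MixedGraph V) : Prop :=
  M.graph.Connected ∧ 1 ≤ cyclomatic M.graph ∧ CyclesVertexDisjoint M.graph ∧
  NoPendantVerts M.graph ∧
  ∃ (C : M.graph.Subgraph) (x : V), IsPendantCycle M.graph C x ∧ Odd C.verts.ncard ∧
    CycleSig M C Odd ∧
    ((M.induce (C.vertsᶜ ∪ {x})).hRank : ℤ) =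
      2 * (matchingNumber (M.induce (C.vertsᶜ ∪ {x})).graph : ℤ) -
        2 * cyclomatic (M.induce (C.vertsᶜ ∪ {x})).graph

/-- The family 𝔛₁ : mixed ∞(p,1,q)-graphs, p even, q odd, whose odd cycle has odd
signature and whose even cycle C̃_p satisfies σ ≡ p (mod 4). -/
def MemX1 (M : MixedGraph V) : Prop :=
  ∃ p q : ℕ, Even p ∧ Odd q ∧ IsInfinityGraph M.graph p q ∧
    OddCyclesSig M Odd ∧ EvenCyclesSig M (fun n s => s % 4 = n % 4)

/-- The family 𝔛₂ : mixed θ(p,l,q)-graphs, p even, l q odd, whose two odd cycles have odd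
signatures and whose even cycle C̃_{q+l-2} satisfies q + l + σ ≡ 2 (mod 4). -/
def MemX2 (M : MixedGraph V) : Prop :=
  ∃ p l q : ℕ, Even p ∧ Odd l ∧ Odd q ∧ IsThetaGraph M.graph p l q ∧
    OddCyclesSig M Odd ∧ EvenCyclesSig M (fun _ s => (q + l + s) % 4 = 2)

/-- The family 𝔊₂ = 𝔊₀ ∪ 𝔛₁ ∪ 𝔛₂ together with the mixed odd cycles of odd signature. -/
def MemG2 [Fintype V] [DecidableEq V] (M : MixedGraph V) : Prop :=
  MemG0 M ∨ MemX1 M ∨ MemX2 M ∨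
    (IsCycleMG M ∧ Odd (Nat.card V) ∧ CycleSig M ⊤ Odd)

/-- The family 𝔜₁. -/
def MemY1 (M : MixedGraph V) : Prop :=
  ∃ p q : ℕ, Even p ∧ Odd q ∧ IsInfinityGraph M.graph p q ∧
    OddCyclesSig M Even ∧ EvenCyclesSig M (fun n s => s % 4 = n % 4)

/-- The family 𝔜₂. -/
def MemY2 (M : MixedGraph V) : Prop :=
  ∃ p l q : ℕ, Even p ∧ Odd l ∧ Odd q ∧ IsThetaGraph M.graph p l q ∧
    OddCyclesSig M Even ∧ EvenCyclesSig M (fun _ s => (q + l + s) % 4 = 2)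

/-- `M` is a disjoint union of `k` even cycles and one odd cycle with even signature. -/
def IsDisjointUnionEvenCyclesOddCycleEvenSig (M : MixedGraph V) (k : ℤ) : Prop :=
  (∀ c : M.graph.ConnectedComponent, IsCycleMG (M.comp c)) ∧
  (({c : M.graph.ConnectedComponent | Even (Nat.card c.supp)}.ncard : ℤ) = k) ∧
  (∃! c : M.graph.ConnectedComponent, Odd (Nat.card c.supp)) ∧
  (∀ c : M.graph.ConnectedComponent, Odd (Nat.card c.supp) →
    CycleSig (M.comp c) ⊤ Even)

/-- The family 𝔉₀. -/
def MemF0 [Fintype V] [DecidableEq V] (M : MixedGraph V) : Prop :=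
  M.graph.Connected ∧ 2 ≤ cyclomatic M.graph ∧ CyclesVertexDisjoint M.graph ∧
  NoPendantVerts M.graph ∧
  (∃ (C₀ : M.graph.Subgraph) (x₀ : V), IsPendantCycle M.graph C₀ x₀ ∧ Odd C₀.verts.ncard ∧
    CycleSig M C₀ Even ∧
    ∀ C : M.graph.Subgraph, IsCycleSubgraph C → C ≠ C₀ →
      Even C.verts.ncard ∧ CycleSig M C (fun s => s % 4 = C.verts.ncard % 4)) ∧
  (∃ (Cq : M.graph.Subgraph) (x : V), IsPendantCycle M.graph Cq x ∧ Even Cq.verts.ncard ∧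
    ∃ S : Set ↥(Cq.vertsᶜ ∪ {x}),
      PendantReaches (M.induce (Cq.vertsᶜ ∪ {x})).graph S ∧
      NoPendantIn (M.induce (Cq.vertsᶜ ∪ {x})).graph S ∧
      IsDisjointUnionEvenCyclesOddCycleEvenSig
        ((M.induce (Cq.vertsᶜ ∪ {x})).induce S)
        (cyclomatic (M.induce (Cq.vertsᶜ ∪ {x})).graph))

/-- The family 𝔉₂ = 𝔉₀ ∪ 𝔜₁ ∪ 𝔜₂ together with the mixed odd cycles of even signature. -/
def MemF2 [Fintype V] [DecidableEq V] (M : MixedGraph V) : Prop :=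
  MemF0 M ∨ MemY1 M ∨ MemY2 M ∨
    (IsCycleMG M ∧ Odd (Nat.card V) ∧ CycleSig M ⊤ Even)

/-- A connected component that is either an even cycle C̃_q with σ ≡ q (mod 4),
or an isolated vertex. -/
def GoodOtherComp (M : MixedGraph V) : Prop :=
  (IsCycleMG M ∧ Even (Nat.card V) ∧
    CycleSig M ⊤ (fun s => s % 4 = (Nat.card V) % 4)) ∨
  Nat.card V = 1

/-- A fractional matching of `G`, given as a weight function on `Sym2 V` vanishing
outside the edge set. -/
def IsFracMatching [Fintype V] [DecidableEq V] (G : SimpleGraph V) (f : Sym2 V → ℝ) : Prop :=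
  (∀ e ∈ G.edgeSet, 0 ≤ f e ∧ f e ≤ 1) ∧ (∀ e, e ∉ G.edgeSet → f e = 0) ∧
    ∀ v : V, ∑ e ∈ Finset.univ.filter (fun e : Sym2 V => v ∈ e), f e ≤ 1

/-- The fractional matching number m*(G). -/
noncomputable def fracMatchingNumber [Fintype V] [DecidableEq V] (G : SimpleGraph V) : ℝ :=
  sSup {x : ℝ | ∃ f : Sym2 V → ℝ, IsFracMatching G f ∧ ∑ e : Sym2 V, f e = x}

/-- Membership in the family ℱ : fractional matchings of total weight m*(G) taking
values in {0, 1/2, 1}. -/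
def InOptFamily [Fintype V] [DecidableEq V] (G : SimpleGraph V) (f : Sym2 V → ℝ) : Prop :=
  IsFracMatching G f ∧ (∑ e : Sym2 V, f e) = fracMatchingNumber G ∧
    ∀ e : Sym2 V, f e = 0 ∨ f e = 1 / 2 ∨ f e = 1

/-- An optimal fractional matching: a member of ℱ with the largest number of
edges of weight 1. -/
def IsOptFracMatching [Fintype V] [DecidableEq V] (G : SimpleGraph V) (f : Sym2 V → ℝ) : Prop :=
  InOptFamily G f ∧
    ∀ g : Sym2 V → ℝ, InOptFamily G g →
      {e : Sym2 V | g e = 1}.ncard ≤ {e : Sym2 V | f e = 1}.ncard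

/-- E₁(C) : the edges of `G` with exactly one endpoint on the cycle `C`. -/
def cutEdges (G : SimpleGraph V) (C : G.Subgraph) : Set (Sym2 V) :=
  {e | e ∈ G.edgeSet ∧ ∃ a b : V, e = s(a, b) ∧ a ∈ C.verts ∧ b ∉ C.verts}

/-!
The excess `r − (2m − 2κ)` is additive over connected components, because the Hermitian adjacency
matrix is block diagonal and every matching edge and every cycle lies in a single component. It is
also nonnegative, and nonnegative integers sum to `1` iff exactly one of them is `1` and the others
vanish.

Nonnegativity: take a maximum matching, pick a vertex on each even cycle, and delete these vertices
together with their partners. The at least `2m − 2κ` matched vertices that survive induce a graph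
with a perfect matching and no even cycle. This perfect matching is unique, since a second one would
create an alternating, hence even, cycle. Modulo the prime `1 + i` of `ℤ[i]`, the determinant of the
corresponding principal submatrix is the permanent over `𝔽₂` of an adjacency matrix; there the terms
of `σ` and `σ⁻¹` cancel unless `σ` is an involution, so it counts perfect matchings and equals `1`.
The submatrix is therefore nonsingular.
-/

theorem sum_eq_one_iff_of_nonneg {ι : Type*} [Fintype ι] {d : ι → ℤ} (hd : ∀ i, 0 ≤ d i) :
    ∑ i, d i = 1 ↔ ∃ i₀, d i₀ = 1 ∧ ∀ i, i ≠ i₀ → d i = 0 := by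
  constructor
  · intro hsum
    obtain ⟨i₀, -, hi₀⟩ := Finset.exists_ne_zero_of_sum_ne_zero (hsum.trans_ne one_ne_zero)
    have hsplit : d i₀ + ∑ i ∈ {i₀}ᶜ, d i = 1 := by
      rw [← Fintype.sum_eq_add_sum_compl, hsum]
    have hrest : 0 ≤ ∑ i ∈ {i₀}ᶜ, d i := Finset.sum_nonneg fun i _ => hd i
    have hpos : 0 < d i₀ := (hd i₀).lt_of_ne' hi₀
    have hzero : ∑ i ∈ {i₀}ᶜ, d i = 0 := by omega
    refine ⟨i₀, by omega, fun i hi => ?_⟩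
    exact (Finset.sum_eq_zero_iff_of_nonneg fun i _ => hd i).mp hzero i (by simpa using hi)
  · rintro ⟨i₀, hone, hzero⟩
    rw [Fintype.sum_eq_single i₀ hzero, hone]

section Rank

variable {ι K : Type*} [Fintype ι] [Field K]

theorem finrank_range_piMap {X Y : ι → Type*} [∀ i, AddCommGroup (X i)] [∀ i, Module K (X i)]
    [∀ i, FiniteDimensional K (X i)] [∀ i, AddCommGroup (Y i)] [∀ i, Module K (Y i)]
    (f : ∀ i, X i →ₗ[K] Y i) :
    Module.finrank K (LinearMap.piMap f).range = ∑ i, Module.finrank K (f i).range := by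
  have hfactor : LinearMap.piMap f =
      LinearMap.piMap (fun i => (f i).range.subtype) ∘ₗ
        LinearMap.piMap (fun i => (f i).rangeRestrict) := rfl
  have hsurj : Function.Surjective (LinearMap.piMap fun i => (f i).rangeRestrict) :=
    Function.Surjective.piMap fun i => (f i).surjective_rangeRestrict
  have hinj : Function.Injective (LinearMap.piMap fun i => (f i).range.subtype) :=
    Function.Injective.piMap fun i => (f i).range.injective_subtype
  rw [hfactor, LinearMap.range_comp_of_range_eq_top _ (LinearMap.range_eq_top.mpr hsurj),
    LinearMap.finrank_range_of_inj hinj, Module.finrank_pi_fintype]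

theorem rank_blockDiagonal' [DecidableEq ι] {m n : ι → Type*} [∀ i, Fintype (n i)]
    (A : ∀ i, Matrix (m i) (n i) K) :
    (Matrix.blockDiagonal' A).rank = ∑ i, (A i).rank := by
  let curryRows := LinearEquiv.piCurry K fun i (_ : m i) => K
  let curryCols := LinearEquiv.piCurry K fun i (_ : n i) => K
  have hconj : (Matrix.blockDiagonal' A).mulVecLin =
      curryRows.symm.toLinearMap ∘ₗ LinearMap.piMap (fun i => (A i).mulVecLin) ∘ₗ
        curryCols.toLinearMap := by
    refine LinearMap.ext fun x => funext fun ⟨i, a⟩ => ?_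
    change ∑ jb, Matrix.blockDiagonal' A ⟨i, a⟩ jb * x jb = ∑ b, A i a b * x ⟨i, b⟩
    rw [Fintype.sum_sigma, Fintype.sum_eq_single i fun j hj => ?_]
    · simp only [Matrix.blockDiagonal'_apply_eq]
    · simp only [Matrix.blockDiagonal'_apply_ne _ _ _ hj.symm, zero_mul, Finset.sum_const_zero]
  rw [Matrix.rank, hconj, LinearMap.range_comp, LinearEquiv.finrank_map_eq,
    LinearEquiv.range_comp, finrank_range_piMap]
  rfl

theorem rank_eq_sum_rank_toSquareBlock {n : Type*} [Fintype n] (p : n → ι)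
    [∀ i, Fintype {u // p u = i}] (A : Matrix n n K) (hA : ∀ u v, p u ≠ p v → A u v = 0) :
    A.rank = ∑ i, (A.toSquareBlock p i).rank := by
  have hblock : A.submatrix (Equiv.sigmaFiberEquiv p) (Equiv.sigmaFiberEquiv p) =
      Matrix.blockDiagonal' (A.toSquareBlock p) := by
    ext ⟨i, u, hu⟩ ⟨j, v, hv⟩
    obtain rfl | hij := eq_or_ne i j
    · rw [Matrix.blockDiagonal'_apply_eq]
      rfl
    · rw [Matrix.blockDiagonal'_apply_ne _ _ _ hij]
      exact hA u v (hu.trans_ne (hij.trans_eq hv.symm))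
  rw [← rank_blockDiagonal', ← hblock, Matrix.rank_submatrix]

end Rank

section Det

variable {n R : Type*} [Fintype n] [DecidableEq n] [CommRing R] [CharP R 2]

theorem det_eq_permanent_of_charTwo (A : Matrix n n R) : A.det = A.permanent := by
  rw [Matrix.det_apply', Matrix.permanent]
  refine Finset.sum_congr rfl fun σ _ => ?_
  obtain h | h := Int.units_eq_one_or (Equiv.Perm.sign σ) <;> simp [h, CharTwo.neg_eq]

/-- The permutations `σ ≠ σ⁻¹` contribute equal terms in pairs. -/
theorem permanent_eq_sum_involutive_of_charTwo {A : Matrix n n R} (hA : A.IsSymm) :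
    A.permanent = ∑ σ : Equiv.Perm n with σ⁻¹ = σ, ∏ i, A (σ i) i := by
  have hinv (σ : Equiv.Perm n) : ∏ i, A (σ⁻¹ i) i = ∏ i, A (σ i) i := by
    rw [← Equiv.prod_comp σ]
    exact Finset.prod_congr rfl fun i _ => by rw [Equiv.Perm.inv_def, σ.symm_apply_apply, hA.apply]
  have hcancel : ∑ σ : Equiv.Perm n with ¬ σ⁻¹ = σ, ∏ i, A (σ i) i = 0 := by
    refine Finset.sum_involution (fun σ _ => σ⁻¹) (fun σ _ => ?_) (fun σ hσ _ => ?_)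
      (fun σ hσ => ?_) fun σ _ => inv_inv σ
    · rw [hinv, CharTwo.add_self_eq_zero]
    · exact (Finset.mem_filter.mp hσ).2
    · simpa [eq_comm] using hσ
  rw [Matrix.permanent, ← Finset.sum_filter_add_sum_filter_not _ fun σ => σ⁻¹ = σ,
    hcancel, add_zero]

end Det

section Matching

variable {G : SimpleGraph V} {f : V → V}

theorem ncard_verts_eq_two_mul_ncard_edgeSet [Finite V] {N : G.Subgraph} (hN : N.IsMatching) :
    N.verts.ncard = 2 * N.edgeSet.ncard := by
  have := Fintype.ofFinite V
  have hedges : N.edgeSet.ncard = N.coe.edgeFinset.card := by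
    rw [← N.image_coe_edgeSet_coe,
      Set.ncard_image_of_injective _ (Sym2.map.injective Subtype.val_injective),
      ← SimpleGraph.coe_edgeFinset, Set.ncard_coe_finset]
  rw [hedges, ← N.coe.sum_degrees_eq_twice_card_edges, Fintype.sum_congr _ (fun _ => 1) fun v => ?_]
  · simp [Set.ncard_eq_toFinset_card']
  · rw [N.coe_degree]
    exact SimpleGraph.Subgraph.degree_eq_one_iff_existsUnique_adj.mpr (hN v.2)

theorem bddAbove_ncard_edgeSet_isMatching [Finite V] (G : SimpleGraph V) :
    BddAbove {k | ∃ N : G.Subgraph, N.IsMatching ∧ N.edgeSet.ncard = k} := by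
  refine ⟨Nat.card (Sym2 V), ?_⟩
  rintro _ ⟨N, -, rfl⟩
  exact Set.ncard_le_card _

theorem exists_isMatching_ncard_eq_matchingNumber [Finite V] (G : SimpleGraph V) :
    ∃ N : G.Subgraph, N.IsMatching ∧ N.edgeSet.ncard = matchingNumber G :=
  Nat.sSup_mem (s := {k | ∃ N : G.Subgraph, N.IsMatching ∧ N.edgeSet.ncard = k})
    ⟨_, ⊥, fun _ hv => hv.elim, rfl⟩ (bddAbove_ncard_edgeSet_isMatching G)

/-- A matching of `G`, encoded as the involution `f` exchanging the endpoints of each matching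
edge and fixing the unmatched vertices. -/
structure IsMatchingInvolution (G : SimpleGraph V) (f : V → V) : Prop where
  involutive : Function.Involutive f
  adj_of_ne : ∀ v, f v ≠ v → G.Adj v (f v)

/-- A perfect matching of `G`, encoded as the involution exchanging the endpoints of each
matching edge. -/
structure IsPerfectMatchingInvolution (G : SimpleGraph V) (f : V → V) : Prop extends
    IsMatchingInvolution G f where
  ne : ∀ v, f v ≠ v

theorem IsPerfectMatchingInvolution.adj (hf : IsPerfectMatchingInvolution G f) (v : V) :
    G.Adj v (f v) :=
  hf.adj_of_ne v (hf.ne v)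

theorem isPerfectMatchingInvolution_iff :
    IsPerfectMatchingInvolution G f ↔ Function.Involutive f ∧ ∀ v, G.Adj v (f v) :=
  ⟨fun hf => ⟨hf.involutive, hf.adj⟩, fun ⟨hinv, hadj⟩ =>
    { involutive := hinv, adj_of_ne := fun v _ => hadj v, ne := fun v => (hadj v).ne' }⟩

theorem IsMatchingInvolution.restrict (hf : IsMatchingInvolution G f) {S : Set V}
    (hS : Set.MapsTo f S S) : IsMatchingInvolution (G.induce S) hS.restrict where
  involutive v := Subtype.ext (hf.involutive v)
  adj_of_ne v hv := hf.adj_of_ne v fun h => hv (Subtype.ext h)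

theorem IsMatchingInvolution.isPerfectMatchingInvolution_restrict
    (hf : IsMatchingInvolution G f) {S : Set V} (hS : Set.MapsTo f S S) (hne : ∀ v ∈ S, f v ≠ v) :
    IsPerfectMatchingInvolution (G.induce S) hS.restrict where
  toIsMatchingInvolution := hf.restrict hS
  ne v hv := hne v v.2 (congrArg Subtype.val hv)

theorem IsMatchingInvolution.exists_isMatching (hf : IsMatchingInvolution G f) :
    ∃ N : G.Subgraph, N.IsMatching ∧ N.verts = {v | f v ≠ v} := by
  refine ⟨{ verts := {v | f v ≠ v}
            Adj := fun v w => f v ≠ v ∧ w = f v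
            adj_sub := ?_
            edge_vert := And.left
            symm := ⟨?_⟩ }, fun v hv => ⟨f v, ⟨hv, rfl⟩, fun _ hw => hw.2⟩, rfl⟩
  · rintro v _ ⟨hv, rfl⟩
    exact hf.adj_of_ne v hv
  · rintro v _ ⟨hv, rfl⟩
    rw [hf.involutive v]
    exact ⟨hv.symm, rfl⟩

theorem exists_isMatchingInvolution_of_isMatching {N : G.Subgraph} (hN : N.IsMatching) :
    ∃ f, IsMatchingInvolution G f ∧ {v | f v ≠ v} = N.verts := by
  choose! mate hmate huniq using fun v (hv : v ∈ N.verts) => hN hv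
  have hmem {v : V} (hv : v ∈ N.verts) : mate v ∈ N.verts := N.edge_vert (hmate v hv).symm
  have hmoved : {v | (if v ∈ N.verts then mate v else v) ≠ v} = N.verts := by
    ext v
    by_cases hv : v ∈ N.verts
    · simpa [hv] using (N.adj_sub (hmate v hv)).ne'
    · simp [hv]
  refine ⟨fun v => if v ∈ N.verts then mate v else v, ⟨fun v => ?_, fun v hv => ?_⟩, hmoved⟩
  · by_cases hv : v ∈ N.verts
    · simp only [if_pos hv, if_pos (hmem hv)]
      exact (huniq _ (hmem hv) v (hmate v hv).symm).symm
    · simp only [if_neg hv]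
  · have hv' : v ∈ N.verts := hmoved ▸ hv
    simpa only [if_pos hv'] using N.adj_sub (hmate v hv')

theorem exists_isMatchingInvolution_ncard_ne_eq [Finite V] (G : SimpleGraph V) :
    ∃ f, IsMatchingInvolution G f ∧ {v | f v ≠ v}.ncard = 2 * matchingNumber G := by
  obtain ⟨N, hN, hcard⟩ := exists_isMatching_ncard_eq_matchingNumber G
  obtain ⟨f, hf, hmoved⟩ := exists_isMatchingInvolution_of_isMatching hN
  exact ⟨f, hf, by rw [hmoved, ncard_verts_eq_two_mul_ncard_edgeSet hN, hcard]⟩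

theorem IsMatchingInvolution.ncard_ne_le_two_mul_matchingNumber [Finite V]
    (hf : IsMatchingInvolution G f) : {v | f v ≠ v}.ncard ≤ 2 * matchingNumber G := by
  obtain ⟨N, hN, hverts⟩ := hf.exists_isMatching
  rw [← hverts, ncard_verts_eq_two_mul_ncard_edgeSet hN]
  exact Nat.mul_le_mul_left 2 (le_csSup (bddAbove_ncard_edgeSet_isMatching G) ⟨N, hN, rfl⟩)

theorem IsPerfectMatchingInvolution.even_card [Finite V] (hf : IsPerfectMatchingInvolution G f) :
    Even (Nat.card V) := by
  obtain ⟨N, hN, hverts⟩ := hf.exists_isMatching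
  have huniv : N.verts = Set.univ := hverts.trans (Set.eq_univ_of_forall hf.ne)
  rw [← Set.ncard_univ, ← huniv, ncard_verts_eq_two_mul_ncard_edgeSet hN]
  exact even_two_mul _

end Matching

section EvenCycle

/-- A cycle subgraph of even length, as counted by `evenCycleCount`. -/
def IsEvenCycle {G : SimpleGraph V} (C : G.Subgraph) : Prop :=
  IsCycleSubgraph C ∧ Even C.verts.ncard

theorem ncard_adj_map {W : Type*} {G : SimpleGraph V} {H : SimpleGraph W} (φ : G.Copy H)
    (C : G.Subgraph) (v : V) : {w | (C.map φ.toHom).Adj (φ v) w}.ncard = {w | C.Adj v w}.ncard := by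
  rw [← Set.ncard_image_of_injective _ φ.injective]
  congr 1
  ext w
  constructor
  · rintro ⟨a, b, hab, ha, rfl⟩
    exact ⟨b, φ.injective ha ▸ hab, rfl⟩
  · rintro ⟨b, hb, rfl⟩
    exact ⟨v, b, hb, rfl, rfl⟩

theorem isCycleSubgraph_map_iff {W : Type*} {G : SimpleGraph V} {H : SimpleGraph W}
    (φ : G.Copy H) {C : G.Subgraph} : IsCycleSubgraph (C.map φ.toHom) ↔ IsCycleSubgraph C := by
  refine and_congr ?_ ?_
  · rw [SimpleGraph.Subgraph.connected_iff', SimpleGraph.Subgraph.connected_iff',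
      (φ.isoSubgraphMap C).connected_iff]
  · rw [SimpleGraph.Subgraph.map_verts, Set.forall_mem_image]
    simp only [SimpleGraph.Copy.coe_toHom, ncard_adj_map]

theorem isEvenCycle_map_iff {W : Type*} {G : SimpleGraph V} {H : SimpleGraph W}
    (φ : G.Copy H) {C : G.Subgraph} : IsEvenCycle (C.map φ.toHom) ↔ IsEvenCycle C := by
  refine and_congr (isCycleSubgraph_map_iff φ) ?_
  rw [SimpleGraph.Subgraph.map_verts, Set.ncard_image_of_injective _ φ.injective]

theorem isCycleSubgraph_toSubgraph {G : SimpleGraph V} (c : G.ConnectedComponent)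
    (hc : ∀ v ∈ c.supp, {w | G.Adj v w}.ncard = 2) : IsCycleSubgraph c.toSubgraph := by
  refine ⟨c.connected_toSubgraph, fun v hv => ?_⟩
  rw [← hc v hv]
  congr 1
  ext w
  exact ⟨fun hw => hw.2.2, fun hw => ⟨hv, c.mem_supp_of_adj_mem_supp hv hw, hw⟩⟩

/-- The union of two matchings given as involutions, a disjoint union of alternating cycles and
paths. -/
def alternatingGraph (f g : V → V) : SimpleGraph V :=
  SimpleGraph.fromRel fun v w => w = f v ∨ w = g v

variable {G : SimpleGraph V} {f g : V → V}

theorem IsPerfectMatchingInvolution.alternatingGraph_adj (hf : IsPerfectMatchingInvolution G f)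
    (hg : IsPerfectMatchingInvolution G g) {v w : V} :
    (alternatingGraph f g).Adj v w ↔ w = f v ∨ w = g v := by
  have hf_symm : v = f w ↔ w = f v := by rw [eq_comm, hf.involutive.eq_iff, eq_comm]
  have hg_symm : v = g w ↔ w = g v := by rw [eq_comm, hg.involutive.eq_iff, eq_comm]
  rw [alternatingGraph, SimpleGraph.fromRel_adj, hf_symm, hg_symm, or_self, and_iff_right_iff_imp]
  rintro (rfl | rfl)
  exacts [(hf.ne v).symm, (hg.ne v).symm]

theorem IsPerfectMatchingInvolution.ne_of_reachable_alternatingGraph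
    (hf : IsPerfectMatchingInvolution G f) (hg : IsPerfectMatchingInvolution G g) {v w : V}
    (hvw : (alternatingGraph f g).Reachable w v) (hv : f v ≠ g v) : f w ≠ g w := by
  rw [SimpleGraph.reachable_iff_reflTransGen] at hvw
  induction hvw using Relation.ReflTransGen.head_induction_on with
  | refl => exact hv
  | @head x y hxy _ hy =>
    obtain rfl | rfl := (hf.alternatingGraph_adj hg).mp hxy
    · rw [hf.involutive x] at hy
      exact fun h => hy (by rw [h, hg.involutive x])
    · rw [hg.involutive x] at hy
      exact fun h => hy (by rw [← h, hf.involutive x])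

theorem IsPerfectMatchingInvolution.isEvenCycle_toSubgraph_alternatingGraph [Finite V]
    (hf : IsPerfectMatchingInvolution G f) (hg : IsPerfectMatchingInvolution G g) {v : V}
    (hv : f v ≠ g v) :
    IsEvenCycle ((alternatingGraph f g).connectedComponentMk v).toSubgraph := by
  set c := (alternatingGraph f g).connectedComponentMk v
  have hdegree : ∀ w ∈ c.supp, {x | (alternatingGraph f g).Adj w x}.ncard = 2 := by
    intro w hw
    have hne := hf.ne_of_reachable_alternatingGraph hg (SimpleGraph.ConnectedComponent.exact hw) hv
    simp only [hf.alternatingGraph_adj hg]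
    exact Set.ncard_pair hne
  have hmaps : Set.MapsTo f c.supp c.supp := fun w hw =>
    c.mem_supp_of_adj_mem_supp hw ((hf.alternatingGraph_adj hg).mpr (Or.inl rfl))
  exact ⟨isCycleSubgraph_toSubgraph c hdegree,
    (hf.isPerfectMatchingInvolution_restrict hmaps fun w _ => hf.ne w).even_card⟩

theorem IsPerfectMatchingInvolution.eq_of_forall_not_isEvenCycle [Finite V]
    (hf : IsPerfectMatchingInvolution G f) (hg : IsPerfectMatchingInvolution G g)
    (hG : ∀ C : G.Subgraph, ¬ IsEvenCycle C) : f = g := by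
  have hle : alternatingGraph f g ≤ G := by
    intro v w hvw
    obtain rfl | rfl := (hf.alternatingGraph_adj hg).mp hvw
    exacts [hf.adj v, hg.adj v]
  by_contra hne
  obtain ⟨v, hv⟩ := Function.ne_iff.mp hne
  exact hG _ ((isEvenCycle_map_iff (SimpleGraph.Copy.ofLE _ _ hle)).mpr
    (hf.isEvenCycle_toSubgraph_alternatingGraph hg hv))

end EvenCycle

section Determinant

theorem det_adjMatrix_of_charTwo [Fintype V] [DecidableEq V] (R : Type*) [CommRing R] [CharP R 2]
    (G : SimpleGraph V) :
    (G.adjMatrix R).det =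
      (Finset.univ.filter fun σ : Equiv.Perm V => IsPerfectMatchingInvolution G σ).card := by
  have hperfect (σ : Equiv.Perm V) :
      IsPerfectMatchingInvolution G σ ↔ σ⁻¹ = σ ∧ ∀ v, G.Adj (σ v) v := by
    have hinv : Function.Involutive σ ↔ σ⁻¹ = σ := by
      rw [inv_eq_iff_mul_eq_one, Equiv.ext_iff]
      rfl
    simp only [isPerfectMatchingInvolution_iff, hinv, G.adj_comm]
  rw [det_eq_permanent_of_charTwo, permanent_eq_sum_involutive_of_charTwo G.isSymm_adjMatrix]
  simp only [SimpleGraph.adjMatrix_apply, Fintype.prod_boole, Finset.sum_boole, hperfect,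
    Finset.filter_filter]

theorem det_adjMatrix_eq_one_of_forall_not_isEvenCycle [Fintype V] [DecidableEq V] (R : Type*)
    [CommRing R] [CharP R 2] {G : SimpleGraph V} {f : V → V} (hf : IsPerfectMatchingInvolution G f)
    (hG : ∀ C : G.Subgraph, ¬ IsEvenCycle C) : (G.adjMatrix R).det = 1 := by
  have hunique : (Finset.univ.filter fun σ : Equiv.Perm V => IsPerfectMatchingInvolution G σ) =
      {hf.involutive.toPerm f} := by
    ext σ
    simp only [Finset.mem_filter_univ, Finset.mem_singleton]
    refine ⟨fun hσ => ?_, ?_⟩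
    · exact DFunLike.coe_injective (hσ.eq_of_forall_not_isEvenCycle hf hG)
    · rintro rfl
      exact hf
  rw [det_adjMatrix_of_charTwo, hunique, Finset.card_singleton, Nat.cast_one]

/-- The Hermitian adjacency matrix, whose entries are Gaussian integers, over `ℤ[i]`. -/
noncomputable def MixedGraph.gaussianMatrix (M : MixedGraph V) : Matrix V V GaussianInt :=
  Matrix.of fun u v =>
    if M.arc u v then ⟨0, 1⟩
    else if M.arc v u then ⟨0, -1⟩
    else if M.graph.Adj u v then 1 else 0

/-- Reduction modulo the prime `1 + i` of `ℤ[i]`, which sends `i` to `1`. -/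
def gaussianIntToZModTwo : GaussianInt →+* ZMod 2 :=
  Zsqrtd.lift ⟨1, by decide⟩

theorem MixedGraph.map_toComplex_gaussianMatrix [Fintype V] [DecidableEq V] (M : MixedGraph V) :
    GaussianInt.toComplex.mapMatrix M.gaussianMatrix = M.hMatrix := by
  ext u v
  rw [RingHom.mapMatrix_apply, Matrix.map_apply, gaussianMatrix, hMatrix, Matrix.of_apply]
  split_ifs <;> simp [GaussianInt.toComplex_def']

theorem MixedGraph.map_toZModTwo_gaussianMatrix [Fintype V] [DecidableEq V] (M : MixedGraph V) :
    gaussianIntToZModTwo.mapMatrix M.gaussianMatrix = M.graph.adjMatrix (ZMod 2) := by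
  ext u v
  rw [RingHom.mapMatrix_apply, Matrix.map_apply, gaussianMatrix, Matrix.of_apply,
    SimpleGraph.adjMatrix_apply]
  split_ifs with huv hadj hvu hadj
  · simp [gaussianIntToZModTwo]
  · exact absurd (M.arc_adj u v huv) hadj
  · simp [gaussianIntToZModTwo]
  · exact absurd (M.arc_adj v u hvu).symm hadj
  · exact map_one _
  · exact map_zero _

theorem MixedGraph.det_hMatrix_ne_zero [Fintype V] [DecidableEq V] (M : MixedGraph V) {f : V → V}
    (hf : IsPerfectMatchingInvolution M.graph f)
    (hM : ∀ C : M.graph.Subgraph, ¬ IsEvenCycle C) : M.hMatrix.det ≠ 0 := by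
  have hdet : gaussianIntToZModTwo M.gaussianMatrix.det = 1 := by
    rw [RingHom.map_det, M.map_toZModTwo_gaussianMatrix,
      det_adjMatrix_eq_one_of_forall_not_isEvenCycle _ hf hM]
  rw [← M.map_toComplex_gaussianMatrix, ← RingHom.map_det, ne_eq, GaussianInt.toComplex_eq_zero]
  intro hzero
  rw [hzero, map_zero] at hdet
  exact zero_ne_one hdet

end Determinant

section LowerBound

theorem exists_ncard_le_evenCycleCount_forall_inter_nonempty [Finite V] (G : SimpleGraph V) :
    ∃ X : Set V, X.ncard ≤ evenCycleCount G ∧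
      ∀ C : G.Subgraph, IsEvenCycle C → (C.verts ∩ X).Nonempty := by
  choose x hx using fun C : {C : G.Subgraph // IsEvenCycle C} => C.2.1.1.nonempty
  refine ⟨Set.range x, ?_, fun C hC => ⟨x ⟨C, hC⟩, hx ⟨C, hC⟩, Set.mem_range_self _⟩⟩
  rw [← Set.image_univ]
  exact (Set.ncard_image_le (Set.toFinite _)).trans (Set.ncard_univ _).le

theorem MixedGraph.hRank_induce_le [Fintype V] [DecidableEq V] (M : MixedGraph V) (S : Set V)
    [Fintype S] : (M.induce S).hRank ≤ M.hRank :=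
  M.hMatrix.rank_submatrix_le (Subtype.val : S → V) Subtype.val

theorem MixedGraph.ncard_le_hRank_of_mapsTo [Fintype V] [DecidableEq V] (M : MixedGraph V)
    {S : Set V} {f : V → V} (hf : IsMatchingInvolution M.graph f) (hS : Set.MapsTo f S S)
    (hne : ∀ v ∈ S, f v ≠ v) (hcycle : ∀ C : M.graph.Subgraph, IsEvenCycle C → ¬ C.verts ⊆ S) :
    S.ncard ≤ M.hRank := by
  have hinduce : ∀ C : (M.induce S).graph.Subgraph, ¬ IsEvenCycle C := by
    intro C hC
    refine hcycle _ ((isEvenCycle_map_iff (SimpleGraph.Copy.induce M.graph S)).mpr hC) ?_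
    rintro _ ⟨v, -, rfl⟩
    exact v.2
  have hdet := (M.induce S).det_hMatrix_ne_zero
    (hf.isPerfectMatchingInvolution_restrict hS hne) hinduce
  calc S.ncard = (M.induce S).hRank := by
        rw [hRank, Matrix.rank_of_det_ne_zero hdet, Fintype.card_eq_nat_card, Nat.card_coe_set_eq]
    _ ≤ M.hRank := M.hRank_induce_le S

theorem MixedGraph.two_mul_matchingNumber_le [Fintype V] [DecidableEq V] (M : MixedGraph V) :
    2 * matchingNumber M.graph ≤ M.hRank + 2 * evenCycleCount M.graph := by
  obtain ⟨f, hf, hcard⟩ := exists_isMatchingInvolution_ncard_ne_eq M.graph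
  obtain ⟨X, hX, hcycle⟩ := exists_ncard_le_evenCycleCount_forall_inter_nonempty M.graph
  have hdeleted : (X ∪ f ⁻¹' X).ncard ≤ 2 * X.ncard := by
    have hpreimage : (f ⁻¹' X).ncard = X.ncard :=
      Set.ncard_preimage_of_injective_subset_range hf.involutive.injective
        fun v _ => hf.involutive.surjective v
    have := Set.ncard_union_le X (f ⁻¹' X)
    omega
  have hmaps : Set.MapsTo f ({v | f v ≠ v} \ (X ∪ f ⁻¹' X)) ({v | f v ≠ v} \ (X ∪ f ⁻¹' X)) := by
    rintro v ⟨hv, hvX⟩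
    simp only [Set.mem_sdiff, Set.mem_ofPred_eq, Set.mem_union, Set.mem_preimage,
      hf.involutive v] at hv hvX ⊢
    exact ⟨hv.symm, fun h => hvX h.symm⟩
  have hsurviving : ({v | f v ≠ v} \ (X ∪ f ⁻¹' X)).ncard ≤ M.hRank := by
    refine M.ncard_le_hRank_of_mapsTo hf hmaps (fun v hv => hv.1) fun C hC hsub => ?_
    obtain ⟨v, hvC, hvX⟩ := hcycle C hC
    exact (hsub hvC).2 (Or.inl hvX)
  have hsplit := Set.ncard_le_ncard_sdiff_add_ncard {v | f v ≠ v} (X ∪ f ⁻¹' X)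
  omega

end LowerBound

section Components

variable {G : SimpleGraph V}

theorem ncard_eq_sum_ncard_preimage_supp [Finite V] (G : SimpleGraph V)
    [Fintype G.ConnectedComponent] (s : Set V) :
    s.ncard = ∑ c : G.ConnectedComponent, (Subtype.val ⁻¹' s : Set c.supp).ncard := by
  have := Fintype.ofFinite V
  rw [Set.ncard_eq_toFinset_card', Finset.card_eq_sum_card_fiberwise (f := G.connectedComponentMk)
    (t := Finset.univ) fun _ _ => Finset.mem_coe.mpr (Finset.mem_univ _)]
  refine Finset.sum_congr rfl fun c _ => ?_
  rw [← Set.ncard_image_of_injective _ Subtype.val_injective, Subtype.image_preimage_coe,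
    ← Set.ncard_coe_finset]
  congr 1
  ext v
  simp [and_comm]

theorem IsMatchingInvolution.mapsTo_supp {f : V → V} (hf : IsMatchingInvolution G f)
    (c : G.ConnectedComponent) : Set.MapsTo f c.supp c.supp := by
  intro v hv
  by_cases hfix : f v = v
  · rwa [hfix]
  · exact c.mem_supp_of_adj_mem_supp hv (hf.adj_of_ne v hfix)

/-- The self-map of `V` acting on each component `c` as `f c`. -/
def glueComponents (f : ∀ c : G.ConnectedComponent, c.supp → c.supp) (v : V) : V :=
  f (G.connectedComponentMk v) ⟨v, rfl⟩

theorem glueComponents_coe (f : ∀ c : G.ConnectedComponent, c.supp → c.supp)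
    (c : G.ConnectedComponent) (v : c.supp) : glueComponents f v = f c v := by
  obtain ⟨v, rfl⟩ := v
  rfl

theorem isMatchingInvolution_glueComponents
    {f : ∀ c : G.ConnectedComponent, c.supp → c.supp}
    (hf : ∀ c, IsMatchingInvolution (G.induce c.supp) (f c)) :
    IsMatchingInvolution G (glueComponents f) where
  involutive v := by
    change glueComponents f (f (G.connectedComponentMk v) ⟨v, rfl⟩) = v
    rw [glueComponents_coe, (hf _).involutive]
  adj_of_ne v hv := (hf _).adj_of_ne ⟨v, rfl⟩ fun h => hv (congrArg Subtype.val h)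

theorem matchingNumber_eq_sum [Finite V] (G : SimpleGraph V) [Fintype G.ConnectedComponent] :
    matchingNumber G = ∑ c : G.ConnectedComponent, matchingNumber (G.induce c.supp) := by
  have hle : 2 * matchingNumber G ≤
      ∑ c : G.ConnectedComponent, 2 * matchingNumber (G.induce c.supp) := by
    obtain ⟨f, hf, hcard⟩ := exists_isMatchingInvolution_ncard_ne_eq G
    rw [← hcard, ncard_eq_sum_ncard_preimage_supp G]
    refine Finset.sum_le_sum fun c _ => ?_
    simpa [Subtype.ext_iff] using
      (hf.restrict (hf.mapsTo_supp c)).ncard_ne_le_two_mul_matchingNumber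
  have hge : ∑ c : G.ConnectedComponent, 2 * matchingNumber (G.induce c.supp) ≤
      2 * matchingNumber G := by
    choose f hf hcard using fun c : G.ConnectedComponent =>
      exists_isMatchingInvolution_ncard_ne_eq (G.induce c.supp)
    have hglue := (isMatchingInvolution_glueComponents hf).ncard_ne_le_two_mul_matchingNumber
    rw [ncard_eq_sum_ncard_preimage_supp G] at hglue
    simpa [← hcard, glueComponents_coe, Subtype.ext_iff] using hglue
  rw [← Finset.mul_sum] at hle hge
  omega

theorem subgraph_comap_map {W : Type*} {H : SimpleGraph W} (φ : G.Copy H) (C : G.Subgraph) :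
    (C.map φ.toHom).comap φ.toHom = C := by
  ext v w
  · exact φ.injective.mem_set_image
  · refine ⟨?_, fun hvw => ⟨C.adj_sub hvw, v, w, hvw, rfl, rfl⟩⟩
    rintro ⟨-, a, b, hab, ha, hb⟩
    rwa [φ.injective ha, φ.injective hb] at hab

theorem verts_subset_supp_of_connected {C : G.Subgraph} (hC : C.Connected) {v : V}
    (hv : v ∈ C.verts) : C.verts ⊆ (G.connectedComponentMk v).supp := fun w hw =>
  SimpleGraph.ConnectedComponent.sound ((hC.coe.preconnected ⟨w, hw⟩ ⟨v, hv⟩).map C.hom)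

theorem subgraph_map_comap_induce {C : G.Subgraph} {S : Set V} (hS : C.verts ⊆ S) :
    (C.comap (SimpleGraph.Copy.induce G S).toHom).map (SimpleGraph.Copy.induce G S).toHom = C := by
  ext v w
  · refine ⟨?_, fun hv => ⟨⟨v, hS hv⟩, hv, rfl⟩⟩
    rintro ⟨v, hv, rfl⟩
    exact hv
  · refine ⟨?_, fun hvw => ⟨⟨v, hS (C.edge_vert hvw)⟩, ⟨w, hS (C.edge_vert hvw.symm)⟩,
      ⟨C.adj_sub hvw, hvw⟩, rfl, rfl⟩⟩
    rintro ⟨v, w, hvw, rfl, rfl⟩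
    exact hvw.2

theorem evenCycleCount_eq_sum [Finite V] (G : SimpleGraph V) [Fintype G.ConnectedComponent] :
    evenCycleCount G = ∑ c : G.ConnectedComponent, evenCycleCount (G.induce c.supp) := by
  let ι (c : G.ConnectedComponent) := SimpleGraph.Copy.induce G c.supp
  let inclusion : (Σ c : G.ConnectedComponent, {C : (G.induce c.supp).Subgraph // IsEvenCycle C}) →
      {C : G.Subgraph // IsEvenCycle C} :=
    fun p => ⟨p.2.1.map (ι p.1).toHom, (isEvenCycle_map_iff (ι p.1)).mpr p.2.2⟩
  have hinjective : Function.Injective inclusion := by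
    rintro ⟨c, C, hC⟩ ⟨d, D, hD⟩ h
    have hmap : C.map (ι c).toHom = D.map (ι d).toHom := congrArg Subtype.val h
    obtain ⟨v, hv⟩ := hC.1.1.nonempty
    obtain ⟨w, -, hwv⟩ : (v : V) ∈ (D.map (ι d).toHom).verts := hmap ▸ Set.mem_image_of_mem _ hv
    obtain rfl : c = d := SimpleGraph.ConnectedComponent.eq_of_common_vertex v.2 (hwv ▸ w.2)
    obtain rfl : C = D := Function.LeftInverse.injective (subgraph_comap_map (ι c)) hmap
    rfl
  have hsurjective : Function.Surjective inclusion := by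
    rintro ⟨C, hC⟩
    obtain ⟨v, hv⟩ := hC.1.1.nonempty
    have hmap := subgraph_map_comap_induce (verts_subset_supp_of_connected hC.1.1 hv)
    exact ⟨⟨_, _, (isEvenCycle_map_iff (ι _)).mp (hmap.symm ▸ hC)⟩, Subtype.ext hmap⟩
  calc evenCycleCount G
      = Nat.card (Σ c : G.ConnectedComponent, {C : (G.induce c.supp).Subgraph // IsEvenCycle C}) :=
        (Nat.card_congr (Equiv.ofBijective inclusion ⟨hinjective, hsurjective⟩)).symm
    _ = ∑ c : G.ConnectedComponent, evenCycleCount (G.induce c.supp) := Nat.card_sigma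

theorem MixedGraph.hMatrix_apply_eq_zero_of_not_adj [Fintype V] [DecidableEq V] (M : MixedGraph V)
    {u v : V} (huv : ¬ M.graph.Adj u v) : M.hMatrix u v = 0 := by
  rw [hMatrix, if_neg fun h => huv (M.arc_adj u v h), if_neg fun h => huv (M.arc_adj v u h).symm,
    if_neg huv]

theorem MixedGraph.hRank_eq_sum_comp [Fintype V] [DecidableEq V] (M : MixedGraph V) :
    M.hRank = ∑ c, (M.comp c).hRank := by
  rw [hRank, rank_eq_sum_rank_toSquareBlock M.graph.connectedComponentMk M.hMatrix fun _ _ huv =>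
    M.hMatrix_apply_eq_zero_of_not_adj fun h =>
      huv (SimpleGraph.ConnectedComponent.connectedComponentMk_eq_of_adj h)]
  simp only [hRank]
  congr!

/-- The excess of the `H`-rank over the lower bound `2m(G) − 2κ(G)`. -/
noncomputable def MixedGraph.hRankExcess [Fintype V] [DecidableEq V] (M : MixedGraph V) : ℤ :=
  M.hRank - (2 * matchingNumber M.graph - 2 * evenCycleCount M.graph)

theorem MixedGraph.hRankExcess_nonneg [Fintype V] [DecidableEq V] (M : MixedGraph V) :
    0 ≤ M.hRankExcess := by
  have := M.two_mul_matchingNumber_le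
  rw [hRankExcess]
  omega

theorem MixedGraph.hRank_eq_lower_bound_add_iff [Fintype V] [DecidableEq V] (M : MixedGraph V)
    (k : ℤ) : (M.hRank : ℤ) = 2 * matchingNumber M.graph - 2 * evenCycleCount M.graph + k ↔
      M.hRankExcess = k := by
  rw [hRankExcess, sub_eq_iff_eq_add']

theorem MixedGraph.hRankExcess_eq_sum_comp [Fintype V] [DecidableEq V] (M : MixedGraph V) :
    M.hRankExcess = ∑ c, (M.comp c).hRankExcess := by
  simp only [hRankExcess, Finset.sum_sub_distrib, ← Finset.mul_sum, ← Nat.cast_sum]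
  rw [M.hRank_eq_sum_comp, matchingNumber_eq_sum M.graph, evenCycleCount_eq_sum M.graph]
  rfl

end Components

/-- r(G̃) = 2m(G) − 2κ(G) + 1 iff exactly one connected component
G̃₀ satisfies r(G̃₀) = 2m(G₀) − 2κ(G₀) + 1 while every other component G̃ᵢ satisfies
r(G̃ᵢ) = 2m(Gᵢ) − 2κ(Gᵢ). -/
theorem hRank_eq_lower_bound_add_one_iff_components
    {V : Type u} [Fintype V] [DecidableEq V] (M : MixedGraph V) :
    (M.hRank : ℤ) =
        2 * (matchingNumber M.graph : ℤ) - 2 * (evenCycleCount M.graph : ℤ) + 1 ↔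
      ∃ c₀ : M.graph.ConnectedComponent,
        ((M.comp c₀).hRank : ℤ) =
          2 * (matchingNumber (M.comp c₀).graph : ℤ) -
            2 * (evenCycleCount (M.comp c₀).graph : ℤ) + 1 ∧
        ∀ c : M.graph.ConnectedComponent, c ≠ c₀ →
          ((M.comp c).hRank : ℤ) =
            2 * (matchingNumber (M.comp c).graph : ℤ) -
              2 * (evenCycleCount (M.comp c).graph : ℤ) := by
  have hone (c) := (M.comp c).hRank_eq_lower_bound_add_iff 1
  have hzero (c) := (M.comp c).hRank_eq_lower_bound_add_iff 0
  simp only [add_zero] at hzero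
  rw [M.hRank_eq_lower_bound_add_iff, M.hRankExcess_eq_sum_comp,
    sum_eq_one_iff_of_nonneg fun c => (M.comp c).hRankExcess_nonneg]
  simp only [hone, hzero]

end MixedPaper
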